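/- Let 0 < ρ < ρ' and let X be a normed space. Suppose γ assigns to each x ∈ X a function γ(x) in the Filipović space H_{ρ'} with lim_{ξ→∞} γ(x)(ξ) = 0, and that γ is locally Lipschitz in the ball sense as a map into (H_{ρ'}, ‖·‖_{ρ'}) with increasing Lipschitz function L_γ and increasing boundedness function B_γ (so ‖γ(x₁) − γ(x₂)‖_{ρ'} ≤ L_γ(r)‖x₁ − x₂‖_X and ‖γ(x)‖_{ρ'} ≤ B_γ(r) whenever the X-norms of the arguments are at most r). Set K_{ρ,ρ'} := (1 + 1/√ρ)·√(1/(ρ'(ρ'−ρ))) and V_K(r) := r(1+r)e^{Kr}. Then for every λ > 0 the map α_λ(x) := γ(x)·(1 − λ·exp(−∫_0^· γ(x)(t) dt)) satisfies: α_λ(x) belongs to H_ρ with lim_{ξ→∞} α_λ(x)(ξ) = 0 for every x; α_λ is locally Lipschitz in the ball sense as a map into (H_ρ, ‖·‖_ρ); and there exists a constant K > 0, independent of λ, such that for every r ≥ 0: ‖α_λ(x₁) − α_λ(x₂)‖_ρ ≤ K·L_γ(r)·((1+λ) + λ·V_{K_{ρ,ρ'}}(B_γ(r)))·‖x₁ −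 x₂‖_X whenever ‖x₁‖_X, ‖x₂‖_X ≤ r, and ‖α_λ(x)‖_ρ ≤ K·(B_γ(r) + λ·V_{K_{ρ,ρ'}}(B_γ(r))) whenever ‖x‖_X ≤ r. -/

import Mathlib

open MeasureTheory Filter

/-- `h : [0,∞) → ℝ` belongs to the Filipović space `H_ρ` with derivative `g`:
`g` is (a.e.) measurable on `[0,∞)`, `h x = h 0 + ∫_0^x g(t) dt` for all `x ≥ 0`, and
`∫_0^∞ g(t)² e^{ρ t} dt < ∞`. -/
def MemFil (ρ : ℝ) (h g : ℝ → ℝ) : Prop :=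
  AEMeasurable g (volume.restrict (Set.Ici (0:ℝ))) ∧
  (∀ x : ℝ, 0 ≤ x → h x = h 0 + ∫ t in (0:ℝ)..x, g t) ∧
  IntegrableOn (fun t => (g t) ^ 2 * Real.exp (ρ * t)) (Set.Ici (0:ℝ))

/-- The Filipović norm `‖h‖_ρ = (h(0)² + ∫_0^∞ g(t)² e^{ρ t} dt)^{1/2}`. -/
noncomputable def filNorm (ρ : ℝ) (h g : ℝ → ℝ) : ℝ :=
  Real.sqrt ((h 0) ^ 2 + ∫ t in Set.Ici (0:ℝ), (g t) ^ 2 * Real.exp (ρ * t))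

/-- The constant `K_{ρ,ρ'} = (1 + 1/√ρ)·√(1/(ρ'(ρ'−ρ)))`. -/
noncomputable def Krr (ρ ρ' : ℝ) : ℝ :=
  (1 + 1 / Real.sqrt ρ) * Real.sqrt (1 / (ρ' * (ρ' - ρ)))

/-- The strictly increasing function `V_K(r) = r(1+r)e^{Kr}`. -/
noncomputable def VK (K r : ℝ) : ℝ := r * (1 + r) * Real.exp (K * r)

/-!
A curve `h` vanishing at infinity is `-∫_t^∞ g` for its derivative `g`, so Cauchy–Schwarz against
`e^{-ρt}` gives `|h(t)| ≤ ‖h‖_ρ e^{-ρt/2} / √ρ`. Two consequences: `|∫_0^t h| ≤ 2 / (ρ√ρ) ‖h‖_ρ`,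
so that the discount factor `E = exp (-∫_0^· h)` is bounded and locally Lipschitz in `h`, uniformly
in `t`; and `(h, k) ↦ h k` is bounded from `H⁰_ρ × H⁰_ρ` to `L²(e^{ρt} dt)`.

Since `E' = -h E`, the derivative of `h (1 - λE)` is `(1 - λE) g + λE h²`: bounded multipliers
acting on elements of `L²(e^{ρt} dt)`, which the product estimate controls. The one term
`λ e^{κ‖h‖}` of the Lipschitz bound that lacks a factor `‖h‖` is split by `e^x ≤ 1 + x e^x`. All of
this happens at the exponent `ρ'`; passing to a smaller exponent only decreases the norm, and
`2√ρ √(ρ' - ρ) ≤ ρ'` gives `2 / (ρ'√ρ') ≤ K_{ρ,ρ'}` for the constant `Krr` of the theorem.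
-/

section

open Set Real

section L2

variable {α : Type*} [MeasurableSpace α] {μ : Measure α} {f g : α → ℝ}

lemma lpNorm_two_eq_sqrt_integral (hf : AEStronglyMeasurable f μ) :
    lpNorm f 2 μ = √(∫ x, f x ^ 2 ∂μ) := by
  rw [lpNorm_eq_integral_norm_rpow_toReal two_ne_zero ENNReal.ofNat_ne_top hf, sqrt_eq_rpow]
  simp

lemma abs_integral_mul_le_lpNorm_mul_lpNorm (hf : MemLp f 2 μ) (hg : MemLp g 2 μ) :
    |∫ x, f x * g x ∂μ| ≤ lpNorm f 2 μ * lpNorm g 2 μ := by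
  have hölder := integral_mul_norm_le_Lp_mul_Lq HolderConjugate.two_two
    (by simpa using hf) (by simpa using hg)
  calc |∫ x, f x * g x ∂μ| ≤ ∫ x, ‖f x‖ * ‖g x‖ ∂μ := by
        simpa only [norm_mul, norm_eq_abs] using norm_integral_le_integral_norm fun x => f x * g x
    _ ≤ lpNorm f 2 μ * lpNorm g 2 μ := by
        rw [lpNorm_two_eq_sqrt_integral hf.1, lpNorm_two_eq_sqrt_integral hg.1]
        simpa [sqrt_eq_rpow] using hölder

end L2

lemma abs_exp_sub_exp_le {a b c : ℝ} (ha : a ≤ c) (hb : b ≤ c) :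
    |exp a - exp b| ≤ exp c * |a - b| :=
  Convex.norm_image_sub_le_of_norm_deriv_le (fun _ _ => differentiableAt_exp)
    (fun x (hx : x ∈ Iic c) => by simpa using hx) (convex_Iic c) hb ha

lemma exp_le_one_add_mul_exp (x : ℝ) : exp x ≤ 1 + x * exp x := by
  have h : (1 - x) * exp x ≤ exp (-x) * exp x :=
    mul_le_mul_of_nonneg_right (one_sub_le_exp_neg x) (exp_pos x).le
  rw [← exp_add, neg_add_cancel, exp_zero] at h
  linarith

lemma memLp_two_exp_neg_half_mul {a : ℝ} (ha : 0 < a) (t : ℝ) :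
    MemLp (fun s => exp (-(a / 2 * s))) 2 (volume.restrict (Ici t)) := by
  rw [memLp_two_iff_integrable_sq (by fun_prop)]
  have hexp := integrableOn_exp_mul_Ioi (neg_lt_zero.mpr ha) t
  refine ((integrableOn_Ici_iff_integrableOn_Ioi).mpr hexp).congr (ae_of_all _ fun s => ?_)
  simp only [← exp_nat_mul]
  ring_nf

lemma lpNorm_two_exp_neg_half_mul {a : ℝ} (ha : 0 < a) (t : ℝ) :
    lpNorm (fun s => exp (-(a / 2 * s))) 2 (volume.restrict (Ici t)) =
      exp (-(a / 2 * t)) / √a := by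
  have hsq (s : ℝ) : exp (-(a / 2 * s)) ^ 2 = exp (-a * s) := by
    rw [← exp_nat_mul]; ring_nf
  rw [lpNorm_two_eq_sqrt_integral (by fun_prop), integral_Ici_eq_integral_Ioi]
  simp_rw [hsq]
  rw [integral_exp_mul_Ioi (neg_lt_zero.mpr ha), ← hsq, neg_div_neg_eq, sqrt_div (sq_nonneg _),
    sqrt_sq (exp_pos _).le]

lemma continuousOn_Ici_primitive {f : ℝ → ℝ} {a : ℝ}
    (hf : ∀ x, a ≤ x → IntervalIntegrable f volume a x) :
    ContinuousOn (fun x => ∫ t in a..x, f t) (Ici a) := by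
  intro x hx
  have hx' : a ≤ x + 1 := (mem_Ici.mp hx).trans (le_add_of_nonneg_right zero_le_one)
  have hcont := intervalIntegral.continuousOn_primitive_interval' (hf _ hx') left_mem_uIcc
  rw [uIcc_of_le hx'] at hcont
  refine (hcont x ⟨hx, (lt_add_one x).le⟩).mono_of_mem_nhdsWithin ?_
  exact mem_of_superset (inter_mem_nhdsWithin _ (Iic_mem_nhds (lt_add_one x))) fun _ hy => hy

lemma absolutelyContinuousOnInterval_primitive {f : ℝ → ℝ} {a b : ℝ}
    (hf : IntervalIntegrable f volume a b) (c : ℝ) :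
    AbsolutelyContinuousOnInterval (fun x => c + ∫ t in a..x, f t) a b :=
  (LipschitzWith.const c).lipschitzOnWith.absolutelyContinuousOnInterval.add
    (hf.absolutelyContinuousOnInterval_intervalIntegral left_mem_uIcc)

lemma mul_eq_add_integral_of_primitive {u v u' v' : ℝ → ℝ} {a b : ℝ} (hab : a ≤ b)
    (hu' : IntervalIntegrable u' volume a b) (hv' : IntervalIntegrable v' volume a b)
    (hu : ∀ x ∈ Icc a b, u x = u a + ∫ t in a..x, u' t)
    (hv : ∀ x ∈ Icc a b, v x = v a + ∫ t in a..x, v' t) :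
    u b * v b = u a * v a + ∫ t in a..b, (u' t * v t + u t * v' t) := by
  let U (x : ℝ) := u a + ∫ t in a..x, u' t
  let V (x : ℝ) := v a + ∫ t in a..x, v' t
  have hU : AbsolutelyContinuousOnInterval U a b := absolutelyContinuousOnInterval_primitive hu' _
  have hV : AbsolutelyContinuousOnInterval V a b := absolutelyContinuousOnInterval_primitive hv' _
  have hderiv : ∀ᵐ t, t ∈ uIoc a b →
      deriv U t * V t + U t * deriv V t = u' t * v t + u t * v' t := by
    filter_upwards [hu'.ae_hasDerivAt_integral, hv'.ae_hasDerivAt_integral] with t htu htv ht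
    have htab : t ∈ Icc a b := uIcc_of_le hab ▸ uIoc_subset_uIcc ht
    rw [hu t htab, hv t htab]
    have hUt := (htu (uIoc_subset_uIcc ht) a left_mem_uIcc).const_add (u a)
    have hVt := (htv (uIoc_subset_uIcc ht) a left_mem_uIcc).const_add (v a)
    rw [hUt.deriv, hVt.deriv]
  rw [← intervalIntegral.integral_congr_ae hderiv, hU.integral_deriv_mul_eq_sub hV,
    hu b ⟨hab, le_rfl⟩, hv b ⟨hab, le_rfl⟩]
  simp [U, V]

/-- `g` lies in the weighted space `L²([0,∞), e^{ρt} dt)`; the weight is moved into the function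
so that the `L²` theory of Lebesgue measure applies. -/
def MemExpL2 (ρ : ℝ) (g : ℝ → ℝ) : Prop :=
  MemLp (fun t => exp (ρ / 2 * t) * g t) 2 (volume.restrict (Ici 0))

/-- The norm of `L²([0,∞), e^{ρt} dt)`. -/
noncomputable def expL2Norm (ρ : ℝ) (g : ℝ → ℝ) : ℝ :=
  lpNorm (fun t => exp (ρ / 2 * t) * g t) 2 (volume.restrict (Ici 0))

section ExpL2

variable {ρ ρ' C δ : ℝ} {f g m m₁ m₂ u u₁ u₂ : ℝ → ℝ}

lemma sq_exp_half_mul_mul (ρ t y : ℝ) : (exp (ρ / 2 * t) * y) ^ 2 = y ^ 2 * exp (ρ * t) := by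
  rw [mul_pow, ← exp_nat_mul, mul_comm]
  ring_nf

lemma MemExpL2.aestronglyMeasurable (hg : MemExpL2 ρ g) :
    AEStronglyMeasurable g (volume.restrict (Ici 0)) := by
  have hinv : AEStronglyMeasurable (fun t => exp (-(ρ / 2 * t))) (volume.restrict (Ici 0)) := by
    fun_prop
  refine (hinv.mul hg.1).congr (ae_of_all _ fun t => ?_)
  simp only [Pi.mul_apply, ← mul_assoc, ← exp_add, neg_add_cancel, exp_zero, one_mul]

lemma memExpL2_iff :
    MemExpL2 ρ g ↔ AEMeasurable g (volume.restrict (Ici 0)) ∧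
      IntegrableOn (fun t => g t ^ 2 * exp (ρ * t)) (Ici 0) := by
  have hsq (hg : AEStronglyMeasurable g (volume.restrict (Ici 0))) :
      MemExpL2 ρ g ↔ IntegrableOn (fun t => g t ^ 2 * exp (ρ * t)) (Ici 0) := by
    rw [MemExpL2, memLp_two_iff_integrable_sq (by fun_prop)]
    simp only [sq_exp_half_mul_mul, IntegrableOn]
  refine ⟨fun hg => ⟨hg.aestronglyMeasurable.aemeasurable, (hsq hg.aestronglyMeasurable).mp hg⟩,
    fun hg => (hsq hg.1.aestronglyMeasurable).mpr hg.2⟩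

lemma expL2Norm_nonneg : 0 ≤ expL2Norm ρ g := lpNorm_nonneg

lemma MemExpL2.sq_expL2Norm (hg : MemExpL2 ρ g) :
    expL2Norm ρ g ^ 2 = ∫ t in Ici (0 : ℝ), g t ^ 2 * exp (ρ * t) := by
  simp only [expL2Norm, lpNorm_two_eq_sqrt_integral hg.1, sq_exp_half_mul_mul]
  exact sq_sqrt (integral_nonneg fun t => by positivity)

lemma MemExpL2.add (hf : MemExpL2 ρ f) (hg : MemExpL2 ρ g) :
    MemExpL2 ρ (fun t => f t + g t) := by
  simp only [MemExpL2, mul_add]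
  exact MemLp.add hf hg

lemma MemExpL2.sub (hf : MemExpL2 ρ f) (hg : MemExpL2 ρ g) :
    MemExpL2 ρ (fun t => f t - g t) := by
  simp only [MemExpL2, mul_sub]
  exact MemLp.sub hf hg

lemma MemExpL2.expL2Norm_add_le (hf : MemExpL2 ρ f) :
    expL2Norm ρ (fun t => f t + g t) ≤ expL2Norm ρ f + expL2Norm ρ g := by
  simp only [expL2Norm, mul_add]
  exact lpNorm_add_le hf one_le_two

lemma abs_exp_half_mul_le (hρ : ρ ≤ ρ') (h : ∀ t, 0 ≤ t → |f t| ≤ C * |g t|) :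
    ∀ᵐ t ∂volume.restrict (Ici 0),
      ‖exp (ρ / 2 * t) * f t‖ ≤ C * ‖exp (ρ' / 2 * t) * g t‖ := by
  refine ae_restrict_of_forall_mem measurableSet_Ici fun t (ht : 0 ≤ t) => ?_
  simp only [norm_eq_abs, abs_mul, abs_exp]
  calc exp (ρ / 2 * t) * |f t| ≤ exp (ρ' / 2 * t) * (C * |g t|) := by
        gcongr
        exact h t ht
    _ = C * (exp (ρ' / 2 * t) * |g t|) := by ring

lemma MemExpL2.of_abs_le (hg : MemExpL2 ρ' g) (hρ : ρ ≤ ρ')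
    (hf : AEStronglyMeasurable f (volume.restrict (Ici 0)))
    (h : ∀ t, 0 ≤ t → |f t| ≤ C * |g t|) : MemExpL2 ρ f :=
  MemLp.of_le_mul hg (by fun_prop) (abs_exp_half_mul_le hρ h)

lemma MemExpL2.expL2Norm_le_of_abs_le (hg : MemExpL2 ρ' g) (hρ : ρ ≤ ρ') (hC : 0 ≤ C)
    (hf : AEStronglyMeasurable f (volume.restrict (Ici 0)))
    (h : ∀ t, 0 ≤ t → |f t| ≤ C * |g t|) : expL2Norm ρ f ≤ C * expL2Norm ρ' g := by
  have hle := eLpNorm_le_mul_eLpNorm_of_ae_le_mul (abs_exp_half_mul_le hρ h) 2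
  rw [expL2Norm, expL2Norm, ← toReal_eLpNorm (by fun_prop), ← toReal_eLpNorm hg.1,
    ← ENNReal.toReal_ofReal_mul _ _ hC]
  exact ENNReal.toReal_mono (ENNReal.mul_ne_top ENNReal.ofReal_ne_top hg.2.ne) hle

lemma MemExpL2.mono (hg : MemExpL2 ρ' g) (hρ : ρ ≤ ρ') : MemExpL2 ρ g :=
  hg.of_abs_le hρ hg.aestronglyMeasurable fun _ _ => (one_mul _).ge

lemma MemExpL2.expL2Norm_mono (hg : MemExpL2 ρ' g) (hρ : ρ ≤ ρ') :
    expL2Norm ρ g ≤ expL2Norm ρ' g := by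
  simpa using hg.expL2Norm_le_of_abs_le hρ zero_le_one hg.aestronglyMeasurable
    fun _ _ => (one_mul _).ge

lemma MemExpL2.bounded_mul (hu : MemExpL2 ρ u)
    (hm : AEStronglyMeasurable m (volume.restrict (Ici 0))) (hC : ∀ t, 0 ≤ t → |m t| ≤ C) :
    MemExpL2 ρ (fun t => m t * u t) :=
  hu.of_abs_le le_rfl (hm.mul hu.aestronglyMeasurable) fun t ht => by
    rw [abs_mul]
    exact mul_le_mul_of_nonneg_right (hC t ht) (abs_nonneg _)

lemma MemExpL2.expL2Norm_mul_le (hu : MemExpL2 ρ u)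
    (hm : AEStronglyMeasurable m (volume.restrict (Ici 0))) (hC : ∀ t, 0 ≤ t → |m t| ≤ C) :
    expL2Norm ρ (fun t => m t * u t) ≤ C * expL2Norm ρ u :=
  hu.expL2Norm_le_of_abs_le le_rfl ((abs_nonneg _).trans (hC 0 le_rfl))
    (hm.mul hu.aestronglyMeasurable) fun t ht => by
      rw [abs_mul]
      exact mul_le_mul_of_nonneg_right (hC t ht) (abs_nonneg _)

lemma expL2Norm_mul_sub_mul_le (hu₁ : MemExpL2 ρ u₁) (hu₂ : MemExpL2 ρ u₂)
    (hm₁ : AEStronglyMeasurable m₁ (volume.restrict (Ici 0)))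
    (hm₂ : AEStronglyMeasurable m₂ (volume.restrict (Ici 0)))
    (hC : ∀ t, 0 ≤ t → |m₁ t| ≤ C) (hδ : ∀ t, 0 ≤ t → |m₁ t - m₂ t| ≤ δ) :
    expL2Norm ρ (fun t => m₁ t * u₁ t - m₂ t * u₂ t) ≤
      C * expL2Norm ρ (fun t => u₁ t - u₂ t) + δ * expL2Norm ρ u₂ := by
  have hsplit : (fun t => m₁ t * u₁ t - m₂ t * u₂ t) =
      fun t => m₁ t * (u₁ t - u₂ t) + (m₁ t - m₂ t) * u₂ t := by
    ext t; ring
  rw [hsplit]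
  exact ((hu₁.sub hu₂).bounded_mul hm₁ hC).expL2Norm_add_le.trans <| add_le_add
    ((hu₁.sub hu₂).expL2Norm_mul_le hm₁ hC) (hu₂.expL2Norm_mul_le (hm₁.sub hm₂) hδ)

lemma exp_half_mul_mul_exp_neg (ρ t y : ℝ) : exp (ρ / 2 * t) * y * exp (-(ρ / 2 * t)) = y := by
  rw [mul_right_comm, ← exp_add, add_neg_cancel, exp_zero, one_mul]

lemma MemExpL2.integrableOn_Ici (hg : MemExpL2 ρ g) (hρ : 0 < ρ) : IntegrableOn g (Ici 0) := by
  refine (hg.integrable_mul (memLp_two_exp_neg_half_mul hρ 0)).congr (ae_of_all _ fun t => ?_)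
  exact exp_half_mul_mul_exp_neg ρ t (g t)

lemma MemExpL2.abs_integral_Ioi_le (hg : MemExpL2 ρ g) (hρ : 0 < ρ) {t : ℝ} (ht : 0 ≤ t) :
    |∫ s in Ioi t, g s| ≤ expL2Norm ρ g * (exp (-(ρ / 2 * t)) / √ρ) := by
  have hres : volume.restrict (Ici t) ≤ volume.restrict (Ici 0) :=
    Measure.restrict_mono (Ici_subset_Ici.mpr ht) le_rfl
  have hgt : MemLp (fun s => exp (ρ / 2 * s) * g s) 2 (volume.restrict (Ici t)) :=
    hg.mono_measure hres
  have hnorm : lpNorm (fun s => exp (ρ / 2 * s) * g s) 2 (volume.restrict (Ici t)) ≤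
      expL2Norm ρ g := by
    rw [expL2Norm, ← toReal_eLpNorm hgt.1, ← toReal_eLpNorm hg.1]
    exact ENNReal.toReal_mono hg.2.ne (eLpNorm_mono_measure _ hres)
  calc |∫ s in Ioi t, g s|
      = |∫ s in Ici t, exp (ρ / 2 * s) * g s * exp (-(ρ / 2 * s))| := by
        simp only [exp_half_mul_mul_exp_neg, integral_Ici_eq_integral_Ioi]
    _ ≤ _ := abs_integral_mul_le_lpNorm_mul_lpNorm hgt (memLp_two_exp_neg_half_mul hρ t)
    _ ≤ expL2Norm ρ g * (exp (-(ρ / 2 * t)) / √ρ) := by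
        rw [lpNorm_two_exp_neg_half_mul hρ]
        gcongr

lemma exp_half_mul_exp_neg_mul (ρ t : ℝ) :
    exp (ρ / 2 * t) * exp (-(ρ * t)) = exp (-(ρ / 2 * t)) := by
  rw [← exp_add]
  ring_nf

lemma memExpL2_exp_neg_mul (hρ : 0 < ρ) : MemExpL2 ρ (fun t => exp (-(ρ * t))) := by
  simpa only [MemExpL2, exp_half_mul_exp_neg_mul] using memLp_two_exp_neg_half_mul hρ 0

lemma expL2Norm_exp_neg_mul (hρ : 0 < ρ) : expL2Norm ρ (fun t => exp (-(ρ * t))) = 1 / √ρ := by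
  simp only [expL2Norm, exp_half_mul_exp_neg_mul, lpNorm_two_exp_neg_half_mul hρ, mul_zero,
    neg_zero, exp_zero]

end ExpL2

section Filipovic

variable {ρ ρ' : ℝ} {h g g₁ g₂ h₁ h₂ : ℝ → ℝ}

lemma memFil_iff :
    MemFil ρ h g ↔ (∀ x, 0 ≤ x → h x = h 0 + ∫ t in (0 : ℝ)..x, g t) ∧ MemExpL2 ρ g := by
  rw [MemFil, memExpL2_iff]
  tauto

lemma MemFil.memExpL2 (hh : MemFil ρ h g) : MemExpL2 ρ g := (memFil_iff.mp hh).2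

lemma filNorm_nonneg : 0 ≤ filNorm ρ h g := sqrt_nonneg _

lemma MemFil.filNorm_eq (hh : MemFil ρ h g) :
    filNorm ρ h g = √(h 0 ^ 2 + expL2Norm ρ g ^ 2) := by
  rw [filNorm, hh.memExpL2.sq_expL2Norm]

lemma MemFil.abs_apply_zero_le (hh : MemFil ρ h g) : |h 0| ≤ filNorm ρ h g := by
  rw [hh.filNorm_eq]
  exact abs_le_sqrt (le_add_of_nonneg_right (sq_nonneg _))

lemma MemFil.expL2Norm_le (hh : MemFil ρ h g) : expL2Norm ρ g ≤ filNorm ρ h g := by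
  rw [hh.filNorm_eq]
  exact le_sqrt_of_sq_le (le_add_of_nonneg_left (sq_nonneg _))

lemma MemFil.filNorm_le (hh : MemFil ρ h g) : filNorm ρ h g ≤ |h 0| + expL2Norm ρ g := by
  have hE : 0 ≤ expL2Norm ρ g := expL2Norm_nonneg
  rw [hh.filNorm_eq, ← sq_abs (h 0)]
  refine sqrt_le_iff.mpr ⟨by positivity, ?_⟩
  nlinarith [mul_nonneg (abs_nonneg (h 0)) hE]

lemma MemFil.mono (hh : MemFil ρ' h g) (hρ : ρ ≤ ρ') : MemFil ρ h g :=
  memFil_iff.mpr ⟨hh.2.1, hh.memExpL2.mono hρ⟩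

lemma MemFil.filNorm_mono (hh : MemFil ρ' h g) (hρ : ρ ≤ ρ') :
    filNorm ρ h g ≤ filNorm ρ' h g := by
  rw [hh.filNorm_eq, (hh.mono hρ).filNorm_eq]
  gcongr
  exacts [expL2Norm_nonneg, hh.memExpL2.expL2Norm_mono hρ]

lemma MemFil.intervalIntegrable (hh : MemFil ρ h g) (hρ : 0 < ρ) {a b : ℝ} (ha : 0 ≤ a)
    (hb : 0 ≤ b) : IntervalIntegrable g volume a b :=
  ((hh.memExpL2.integrableOn_Ici hρ).mono_set
    fun _ ht => (le_inf ha hb).trans ht.1).intervalIntegrable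

lemma MemFil.apply_sub_apply (hh : MemFil ρ h g) (hρ : 0 < ρ) {a b : ℝ} (ha : 0 ≤ a)
    (hb : 0 ≤ b) : h b - h a = ∫ t in a..b, g t := by
  rw [hh.2.1 b hb, hh.2.1 a ha, add_sub_add_left_eq_sub]
  exact intervalIntegral.integral_interval_sub_left (hh.intervalIntegrable hρ le_rfl hb)
    (hh.intervalIntegrable hρ le_rfl ha)

lemma MemFil.sub (hh₁ : MemFil ρ h₁ g₁) (hh₂ : MemFil ρ h₂ g₂) (hρ : 0 < ρ) :
    MemFil ρ (fun t => h₁ t - h₂ t) (fun t => g₁ t - g₂ t) := by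
  refine memFil_iff.mpr ⟨fun x hx => ?_, hh₁.memExpL2.sub hh₂.memExpL2⟩
  rw [intervalIntegral.integral_sub (hh₁.intervalIntegrable hρ le_rfl hx)
    (hh₂.intervalIntegrable hρ le_rfl hx), hh₁.2.1 x hx, hh₂.2.1 x hx]
  ring

lemma MemFil.continuousOn (hh : MemFil ρ h g) (hρ : 0 < ρ) : ContinuousOn h (Ici 0) :=
  (continuousOn_const.add (continuousOn_Ici_primitive fun _ hx =>
    hh.intervalIntegrable hρ le_rfl hx)).congr hh.2.1

end Filipovic

/-- `h` lies in the subspace `H⁰_ρ` of the functions in the Filipović space that vanish at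
infinity; as in `MemFil`, `g` is the derivative of `h`. -/
def MemFilZero (ρ : ℝ) (h g : ℝ → ℝ) : Prop :=
  MemFil ρ h g ∧ Tendsto h atTop (nhds 0)

section FilipovicZero

variable {ρ : ℝ} {h g g₁ g₂ h₁ h₂ : ℝ → ℝ}

lemma MemFilZero.sub (hh₁ : MemFilZero ρ h₁ g₁) (hh₂ : MemFilZero ρ h₂ g₂) (hρ : 0 < ρ) :
    MemFilZero ρ (fun t => h₁ t - h₂ t) (fun t => g₁ t - g₂ t) :=
  ⟨hh₁.1.sub hh₂.1 hρ, by simpa using hh₁.2.sub hh₂.2⟩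

lemma MemFilZero.eq_neg_integral_Ioi (hh : MemFilZero ρ h g) (hρ : 0 < ρ) {t : ℝ} (ht : 0 ≤ t) :
    h t = -∫ s in Ioi t, g s := by
  have hint : IntegrableOn g (Ioi t) :=
    (hh.1.memExpL2.integrableOn_Ici hρ).mono_set fun s hs => ht.trans (le_of_lt hs)
  have hlim : Tendsto (fun x => h x - h t) atTop (nhds (∫ s in Ioi t, g s)) := by
    refine (intervalIntegral_tendsto_integral_Ioi t hint tendsto_id).congr' ?_
    filter_upwards [eventually_ge_atTop t] with x hx
    exact (hh.1.apply_sub_apply hρ ht (ht.trans hx)).symm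
  linarith [tendsto_nhds_unique hlim (hh.2.sub_const (h t))]

lemma MemFilZero.abs_apply_le (hh : MemFilZero ρ h g) (hρ : 0 < ρ) {t : ℝ} (ht : 0 ≤ t) :
    |h t| ≤ filNorm ρ h g * (exp (-(ρ / 2 * t)) / √ρ) := by
  rw [hh.eq_neg_integral_Ioi hρ ht, abs_neg]
  refine (hh.1.memExpL2.abs_integral_Ioi_le hρ ht).trans ?_
  gcongr
  exact hh.1.expL2Norm_le

lemma MemFilZero.abs_integral_le (hh : MemFilZero ρ h g) (hρ : 0 < ρ) {t : ℝ} (ht : 0 ≤ t) :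
    |∫ s in (0 : ℝ)..t, h s| ≤ 2 / (ρ * √ρ) * filNorm ρ h g := by
  have hint : IntegrableOn (fun s => filNorm ρ h g / √ρ * exp (-(ρ / 2) * s)) (Ioi 0) :=
    (integrableOn_exp_mul_Ioi (a := -(ρ / 2)) (by linarith) 0).const_mul _
  have hdom : ∀ s ∈ Ioc 0 t, ‖h s‖ ≤ filNorm ρ h g / √ρ * exp (-(ρ / 2) * s) := fun s hs => by
    refine (hh.abs_apply_le hρ hs.1.le).trans_eq ?_
    rw [neg_mul]
    ring
  calc |∫ s in (0 : ℝ)..t, h s|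
      ≤ ∫ s in Ioc 0 t, filNorm ρ h g / √ρ * exp (-(ρ / 2) * s) := by
        rw [intervalIntegral.integral_of_le ht]
        exact norm_integral_le_of_norm_le (hint.mono_set Ioc_subset_Ioi_self)
          (ae_restrict_of_forall_mem measurableSet_Ioc hdom)
    _ ≤ ∫ s in Ioi 0, filNorm ρ h g / √ρ * exp (-(ρ / 2) * s) :=
        setIntegral_mono_set hint
          (ae_of_all _ fun _ => mul_nonneg (div_nonneg filNorm_nonneg (sqrt_nonneg _))
            (exp_pos _).le) Ioc_subset_Ioi_self.eventuallyLE
    _ = 2 / (ρ * √ρ) * filNorm ρ h g := by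
        rw [integral_const_mul, integral_exp_mul_Ioi (by linarith), mul_zero, exp_zero]
        field_simp

lemma MemFilZero.abs_mul_le (hh : MemFilZero ρ h₁ g₁) (hk : MemFilZero ρ h₂ g₂) (hρ : 0 < ρ)
    {t : ℝ} (ht : 0 ≤ t) :
    |h₁ t * h₂ t| ≤ filNorm ρ h₁ g₁ * filNorm ρ h₂ g₂ / ρ * |exp (-(ρ * t))| := by
  have hsq : exp (-(ρ / 2 * t)) ^ 2 = exp (-(ρ * t)) := by
    rw [← exp_nat_mul]
    ring_nf
  calc |h₁ t * h₂ t|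
      ≤ filNorm ρ h₁ g₁ * (exp (-(ρ / 2 * t)) / √ρ) *
          (filNorm ρ h₂ g₂ * (exp (-(ρ / 2 * t)) / √ρ)) := by
        rw [abs_mul]
        gcongr
        · exact (abs_nonneg _).trans (hh.abs_apply_le hρ ht)
        exacts [hh.abs_apply_le hρ ht, hk.abs_apply_le hρ ht]
    _ = filNorm ρ h₁ g₁ * filNorm ρ h₂ g₂ * exp (-(ρ / 2 * t)) ^ 2 / √ρ ^ 2 := by ring
    _ = filNorm ρ h₁ g₁ * filNorm ρ h₂ g₂ / ρ * |exp (-(ρ * t))| := by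
        rw [hsq, sq_sqrt hρ.le, abs_exp]
        ring

lemma MemFilZero.memExpL2_mul (hh : MemFilZero ρ h₁ g₁) (hk : MemFilZero ρ h₂ g₂) (hρ : 0 < ρ) :
    MemExpL2 ρ (fun t => h₁ t * h₂ t) :=
  (memExpL2_exp_neg_mul hρ).of_abs_le le_rfl
    (((hh.1.continuousOn hρ).mul (hk.1.continuousOn hρ)).aestronglyMeasurable measurableSet_Ici)
    fun _ ht => hh.abs_mul_le hk hρ ht

lemma MemFilZero.expL2Norm_mul_le (hh : MemFilZero ρ h₁ g₁) (hk : MemFilZero ρ h₂ g₂)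
    (hρ : 0 < ρ) :
    expL2Norm ρ (fun t => h₁ t * h₂ t) ≤ 1 / (ρ * √ρ) * (filNorm ρ h₁ g₁ * filNorm ρ h₂ g₂) := by
  refine ((memExpL2_exp_neg_mul hρ).expL2Norm_le_of_abs_le le_rfl
    (div_nonneg (mul_nonneg filNorm_nonneg filNorm_nonneg) hρ.le)
    (hh.memExpL2_mul hk hρ).aestronglyMeasurable
    fun _ ht => hh.abs_mul_le hk hρ ht).trans_eq ?_
  rw [expL2Norm_exp_neg_mul hρ]
  ring

end FilipovicZero

/-- The discount factor `exp (-∫₀^ξ h)`, that is, the price of a zero-coupon bond of time to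
maturity `ξ` under the forward curve `h`. -/
noncomputable def discountFactor (h : ℝ → ℝ) (ξ : ℝ) : ℝ := exp (-(∫ t in (0 : ℝ)..ξ, h t))

section DiscountFactor

variable {ρ κ N D : ℝ} {h g h₁ h₂ g₁ g₂ : ℝ → ℝ}

lemma discountFactor_zero (h : ℝ → ℝ) : discountFactor h 0 = 1 := by simp [discountFactor]

lemma continuousOn_discountFactor (hh : ContinuousOn h (Ici 0)) :
    ContinuousOn (discountFactor h) (Ici 0) :=
  (continuousOn_Ici_primitive fun _ hx =>
    (hh.mono (uIcc_of_le hx ▸ Icc_subset_Ici_self)).intervalIntegrable).neg.rexp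

lemma discountFactor_eq_sub_integral (hh : ContinuousOn h (Ici 0)) {x : ℝ} (hx : 0 ≤ x) :
    discountFactor h x = 1 - ∫ t in (0 : ℝ)..x, h t * discountFactor h t := by
  have hcont := continuousOn_discountFactor hh
  have hderiv : ∀ t ∈ Ioo 0 x, HasDerivAt (discountFactor h) (-(h t * discountFactor h t)) t := by
    intro t ht
    have hnhds : Ici 0 ∈ nhds t := Ici_mem_nhds ht.1
    have hprim : HasDerivAt (fun ξ => ∫ s in (0 : ℝ)..ξ, h s) (h t) t :=
      intervalIntegral.integral_hasDerivAt_right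
        (hh.mono (uIcc_of_le ht.1.le ▸ Icc_subset_Ici_self)).intervalIntegrable
        ((hh.mono Ioi_subset_Ici_self).stronglyMeasurableAtFilter isOpen_Ioi t ht.1)
        (hh.continuousAt hnhds)
    exact hprim.fun_neg.exp.congr_deriv (by simp only [discountFactor]; ring)
  have hftc := intervalIntegral.integral_eq_sub_of_hasDerivAt_of_le hx
    (hcont.mono Icc_subset_Ici_self) hderiv
    ((hh.mul hcont).neg.mono (uIcc_of_le hx ▸ Icc_subset_Ici_self)).intervalIntegrable
  rw [intervalIntegral.integral_neg, discountFactor_zero] at hftc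
  linarith

lemma MemFilZero.neg_integral_le (hh : MemFilZero ρ h g) (hρ : 0 < ρ) (hκ : 2 / (ρ * √ρ) ≤ κ)
    (hN : filNorm ρ h g ≤ N) {t : ℝ} (ht : 0 ≤ t) : -(∫ s in (0 : ℝ)..t, h s) ≤ κ * N :=
  (neg_le_abs _).trans <| (hh.abs_integral_le hρ ht).trans <|
    mul_le_mul hκ hN filNorm_nonneg (le_trans (by positivity) hκ)

lemma MemFilZero.discountFactor_le (hh : MemFilZero ρ h g) (hρ : 0 < ρ) (hκ : 2 / (ρ * √ρ) ≤ κ)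
    (hN : filNorm ρ h g ≤ N) {t : ℝ} (ht : 0 ≤ t) : discountFactor h t ≤ exp (κ * N) :=
  exp_le_exp.mpr (hh.neg_integral_le hρ hκ hN ht)

lemma MemFilZero.abs_discountFactor_sub_le (hh₁ : MemFilZero ρ h₁ g₁) (hh₂ : MemFilZero ρ h₂ g₂)
    (hρ : 0 < ρ) (hκ : 2 / (ρ * √ρ) ≤ κ) (hN₁ : filNorm ρ h₁ g₁ ≤ N) (hN₂ : filNorm ρ h₂ g₂ ≤ N)
    (hD : filNorm ρ (fun t => h₁ t - h₂ t) (fun t => g₁ t - g₂ t) ≤ D) {t : ℝ} (ht : 0 ≤ t) :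
    |discountFactor h₁ t - discountFactor h₂ t| ≤ exp (κ * N) * (κ * D) := by
  have hint {h g} (hh : MemFilZero ρ h g) : IntervalIntegrable h volume 0 t :=
    ((hh.1.continuousOn hρ).mono (uIcc_of_le ht ▸ Icc_subset_Ici_self)).intervalIntegrable
  refine (abs_exp_sub_exp_le (hh₁.neg_integral_le hρ hκ hN₁ ht)
    (hh₂.neg_integral_le hρ hκ hN₂ ht)).trans ?_
  rw [neg_sub_neg, abs_sub_comm, ← intervalIntegral.integral_sub (hint hh₁) (hint hh₂)]
  gcongr
  exact ((hh₁.sub hh₂ hρ).abs_integral_le hρ ht).trans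
    (mul_le_mul hκ hD filNorm_nonneg (le_trans (by positivity) hκ))

end DiscountFactor

/-- The drift term `α_λ(h) = h (1 - λ exp (-∫₀ h))` at the forward curve `h`. -/
noncomputable def alpha (lam : ℝ) (h : ℝ → ℝ) (ξ : ℝ) : ℝ := h ξ * (1 - lam * discountFactor h ξ)

/-- The derivative of `alpha lam h` for a forward curve `h` with derivative `g`. -/
noncomputable def alphaDeriv (lam : ℝ) (h g : ℝ → ℝ) (t : ℝ) : ℝ :=
  g t * (1 - lam * discountFactor h t) + h t * (lam * h t * discountFactor h t)

section Alpha

variable {ρ κ N D : ℝ} {h g h₁ h₂ g₁ g₂ : ℝ → ℝ}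

lemma alpha_zero (lam : ℝ) (h : ℝ → ℝ) : alpha lam h 0 = h 0 * (1 - lam) := by
  rw [alpha, discountFactor_zero, mul_one]

lemma alphaDeriv_eq (lam : ℝ) (h g : ℝ → ℝ) (t : ℝ) :
    alphaDeriv lam h g t =
      (1 - lam * discountFactor h t) * g t + lam * discountFactor h t * (h t * h t) := by
  rw [alphaDeriv]
  ring

lemma aestronglyMeasurable_mul_discountFactor (hh : ContinuousOn h (Ici 0)) (lam : ℝ) :
    AEStronglyMeasurable (fun t => lam * discountFactor h t) (volume.restrict (Ici 0)) :=
  ((continuousOn_discountFactor hh).const_smul lam).aestronglyMeasurable measurableSet_Ici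

lemma aestronglyMeasurable_one_sub_mul_discountFactor (hh : ContinuousOn h (Ici 0)) (lam : ℝ) :
    AEStronglyMeasurable (fun t => 1 - lam * discountFactor h t) (volume.restrict (Ici 0)) :=
  aestronglyMeasurable_const.sub (aestronglyMeasurable_mul_discountFactor hh lam)

lemma MemFilZero.abs_mul_discountFactor_le (hh : MemFilZero ρ h g) (hρ : 0 < ρ)
    (hκ : 2 / (ρ * √ρ) ≤ κ) (hN : filNorm ρ h g ≤ N) (lam : ℝ) {t : ℝ} (ht : 0 ≤ t) :
    |lam * discountFactor h t| ≤ |lam| * exp (κ * N) := by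
  rw [abs_mul, discountFactor, abs_exp]
  exact mul_le_mul_of_nonneg_left (hh.discountFactor_le hρ hκ hN ht) (abs_nonneg _)

lemma MemFilZero.abs_one_sub_mul_discountFactor_le (hh : MemFilZero ρ h g) (hρ : 0 < ρ)
    (hκ : 2 / (ρ * √ρ) ≤ κ) (hN : filNorm ρ h g ≤ N) (lam : ℝ) {t : ℝ} (ht : 0 ≤ t) :
    |1 - lam * discountFactor h t| ≤ 1 + |lam| * exp (κ * N) := by
  refine (abs_sub _ _).trans ?_
  rw [abs_one]
  gcongr
  exact hh.abs_mul_discountFactor_le hρ hκ hN lam ht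

lemma MemFilZero.abs_mul_discountFactor_sub_le (hh₁ : MemFilZero ρ h₁ g₁)
    (hh₂ : MemFilZero ρ h₂ g₂) (hρ : 0 < ρ) (hκ : 2 / (ρ * √ρ) ≤ κ)
    (hN₁ : filNorm ρ h₁ g₁ ≤ N) (hN₂ : filNorm ρ h₂ g₂ ≤ N)
    (hD : filNorm ρ (fun t => h₁ t - h₂ t) (fun t => g₁ t - g₂ t) ≤ D) (lam : ℝ) {t : ℝ}
    (ht : 0 ≤ t) :
    |lam * discountFactor h₁ t - lam * discountFactor h₂ t| ≤
      |lam| * (exp (κ * N) * (κ * D)) := by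
  rw [← mul_sub, abs_mul]
  gcongr
  exact hh₁.abs_discountFactor_sub_le hh₂ hρ hκ hN₁ hN₂ hD ht

lemma MemFilZero.memExpL2_one_sub_mul_discountFactor_mul (hh : MemFilZero ρ h g) (hρ : 0 < ρ)
    (lam : ℝ) : MemExpL2 ρ (fun t => (1 - lam * discountFactor h t) * g t) :=
  hh.1.memExpL2.bounded_mul
    (aestronglyMeasurable_one_sub_mul_discountFactor (hh.1.continuousOn hρ) lam)
    fun _ => hh.abs_one_sub_mul_discountFactor_le hρ le_rfl le_rfl lam

lemma MemFilZero.memExpL2_alphaDeriv (hh : MemFilZero ρ h g) (hρ : 0 < ρ) (lam : ℝ) :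
    MemExpL2 ρ (alphaDeriv lam h g) := by
  rw [show alphaDeriv lam h g = _ from funext (alphaDeriv_eq lam h g)]
  exact (hh.memExpL2_one_sub_mul_discountFactor_mul hρ lam).add
    ((hh.memExpL2_mul hh hρ).bounded_mul
      (aestronglyMeasurable_mul_discountFactor (hh.1.continuousOn hρ) lam)
      fun _ => hh.abs_mul_discountFactor_le hρ le_rfl le_rfl lam)

lemma MemFilZero.alpha_eq_add_integral (hh : MemFilZero ρ h g) (hρ : 0 < ρ) (lam : ℝ) {x : ℝ}
    (hx : 0 ≤ x) :
    alpha lam h x = alpha lam h 0 + ∫ t in (0 : ℝ)..x, alphaDeriv lam h g t := by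
  have hcont := hh.1.continuousOn hρ
  have hint : ContinuousOn (fun t => lam * h t * discountFactor h t) (Ici 0) :=
    (hcont.const_smul lam).mul (continuousOn_discountFactor hcont)
  refine mul_eq_add_integral_of_primitive (v := fun t => 1 - lam * discountFactor h t) hx
    (hh.1.intervalIntegrable hρ le_rfl hx)
    (hint.mono (uIcc_of_le hx ▸ Icc_subset_Ici_self)).intervalIntegrable
    (fun y hy => hh.1.2.1 y hy.1) fun y hy => ?_
  rw [discountFactor_eq_sub_integral hcont hy.1, discountFactor_zero]
  simp only [mul_assoc, intervalIntegral.integral_const_mul]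
  ring

lemma MemFilZero.tendsto_alpha (hh : MemFilZero ρ h g) (hρ : 0 < ρ) (lam : ℝ) :
    Tendsto (alpha lam h) atTop (nhds 0) := by
  refine hh.2.zero_mul_isBoundedUnder_le ⟨1 + |lam| * exp (2 / (ρ * √ρ) * filNorm ρ h g), ?_⟩
  refine eventually_map.mpr ((eventually_ge_atTop 0).mono fun t ht => ?_)
  exact hh.abs_one_sub_mul_discountFactor_le hρ le_rfl le_rfl lam ht

lemma MemFilZero.memFilZero_alpha (hh : MemFilZero ρ h g) (hρ : 0 < ρ) (lam : ℝ) :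
    MemFilZero ρ (alpha lam h) (alphaDeriv lam h g) :=
  ⟨memFil_iff.mpr ⟨fun _ hx => hh.alpha_eq_add_integral hρ lam hx, hh.memExpL2_alphaDeriv hρ lam⟩,
    hh.tendsto_alpha hρ lam⟩

lemma MemFilZero.expL2Norm_mul_le_of_le {N₁ N₂ : ℝ} (hh₁ : MemFilZero ρ h₁ g₁)
    (hh₂ : MemFilZero ρ h₂ g₂) (hρ : 0 < ρ) (hκ : 2 / (ρ * √ρ) ≤ κ) (hN₁ : filNorm ρ h₁ g₁ ≤ N₁)
    (hN₂ : filNorm ρ h₂ g₂ ≤ N₂) :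
    expL2Norm ρ (fun t => h₁ t * h₂ t) ≤ κ / 2 * (N₁ * N₂) := by
  have hκ' : 1 / (ρ * √ρ) ≤ κ / 2 := by linarith [show 2 / (ρ * √ρ) = 2 * (1 / (ρ * √ρ)) by ring]
  exact (hh₁.expL2Norm_mul_le hh₂ hρ).trans <| mul_le_mul hκ'
    (mul_le_mul hN₁ hN₂ filNorm_nonneg (filNorm_nonneg.trans hN₁))
    (mul_nonneg filNorm_nonneg filNorm_nonneg) (le_trans (by positivity) hκ')

lemma MemFilZero.expL2Norm_mul_self_sub_le (hh₁ : MemFilZero ρ h₁ g₁) (hh₂ : MemFilZero ρ h₂ g₂)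
    (hρ : 0 < ρ) (hκ : 2 / (ρ * √ρ) ≤ κ) (hN₁ : filNorm ρ h₁ g₁ ≤ N) (hN₂ : filNorm ρ h₂ g₂ ≤ N)
    (hD : filNorm ρ (fun t => h₁ t - h₂ t) (fun t => g₁ t - g₂ t) ≤ D) :
    expL2Norm ρ (fun t => h₁ t * h₁ t - h₂ t * h₂ t) ≤ κ * (D * N) := by
  have hd := hh₁.sub hh₂ hρ
  have hsplit : (fun t => h₁ t * h₁ t - h₂ t * h₂ t) =
      fun t => (h₁ t - h₂ t) * h₁ t + (h₁ t - h₂ t) * h₂ t := by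
    ext t; ring
  rw [hsplit]
  linarith [(hd.memExpL2_mul hh₁ hρ).expL2Norm_add_le (g := fun t => (h₁ t - h₂ t) * h₂ t),
    hd.expL2Norm_mul_le_of_le hh₁ hρ hκ hD hN₁, hd.expL2Norm_mul_le_of_le hh₂ hρ hκ hD hN₂]

lemma MemFilZero.expL2Norm_alphaDeriv_le (hh : MemFilZero ρ h g) (hρ : 0 < ρ)
    (hκ : 2 / (ρ * √ρ) ≤ κ) (hN : filNorm ρ h g ≤ N) (lam : ℝ) :
    expL2Norm ρ (alphaDeriv lam h g) ≤
      (1 + |lam| * exp (κ * N)) * N + |lam| * exp (κ * N) * (κ / 2 * (N * N)) := by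
  have hcont := hh.1.continuousOn hρ
  have hforward := hh.1.memExpL2.expL2Norm_mul_le
    (aestronglyMeasurable_one_sub_mul_discountFactor hcont lam)
    fun _ => hh.abs_one_sub_mul_discountFactor_le hρ hκ hN lam
  have hsquare := (hh.memExpL2_mul hh hρ).expL2Norm_mul_le
    (aestronglyMeasurable_mul_discountFactor hcont lam)
    fun _ => hh.abs_mul_discountFactor_le hρ hκ hN lam
  rw [show alphaDeriv lam h g = _ from funext (alphaDeriv_eq lam h g)]
  refine (hh.memExpL2_one_sub_mul_discountFactor_mul hρ lam).expL2Norm_add_le.trans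
    (add_le_add (hforward.trans ?_) (hsquare.trans ?_))
  · gcongr
    exact hh.1.expL2Norm_le.trans hN
  · gcongr
    exact hh.expL2Norm_mul_le_of_le hh hρ hκ hN hN

lemma MemFilZero.expL2Norm_alphaDeriv_sub_le (hh₁ : MemFilZero ρ h₁ g₁)
    (hh₂ : MemFilZero ρ h₂ g₂) (hρ : 0 < ρ) (hκ : 2 / (ρ * √ρ) ≤ κ)
    (hN₁ : filNorm ρ h₁ g₁ ≤ N) (hN₂ : filNorm ρ h₂ g₂ ≤ N)
    (hD : filNorm ρ (fun t => h₁ t - h₂ t) (fun t => g₁ t - g₂ t) ≤ D) (lam : ℝ) :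
    expL2Norm ρ (fun t => alphaDeriv lam h₁ g₁ t - alphaDeriv lam h₂ g₂ t) ≤
      ((1 + |lam| * exp (κ * N)) * D + |lam| * (exp (κ * N) * (κ * D)) * N) +
        (|lam| * exp (κ * N) * (κ * (D * N)) +
          |lam| * (exp (κ * N) * (κ * D)) * (κ / 2 * (N * N))) := by
  have hmeas {h g} (hh : MemFilZero ρ h g) :=
    aestronglyMeasurable_mul_discountFactor (hh.1.continuousOn hρ) lam
  have hmeasOneSub {h g} (hh : MemFilZero ρ h g) :=
    aestronglyMeasurable_one_sub_mul_discountFactor (hh.1.continuousOn hρ) lam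
  have hbond (t : ℝ) (ht : 0 ≤ t) :=
    hh₁.abs_mul_discountFactor_sub_le hh₂ hρ hκ hN₁ hN₂ hD lam ht
  have hδ : 0 ≤ |lam| * (exp (κ * N) * (κ * D)) := (abs_nonneg _).trans (hbond 0 le_rfl)
  have hforward := expL2Norm_mul_sub_mul_le hh₁.1.memExpL2 hh₂.1.memExpL2 (hmeasOneSub hh₁)
    (hmeasOneSub hh₂) (fun _ => hh₁.abs_one_sub_mul_discountFactor_le hρ hκ hN₁ lam) fun t ht => by
      rw [sub_sub_sub_cancel_left, abs_sub_comm]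
      exact hbond t ht
  have hsquare := expL2Norm_mul_sub_mul_le (hh₁.memExpL2_mul hh₁ hρ) (hh₂.memExpL2_mul hh₂ hρ)
    (hmeas hh₁) (hmeas hh₂) (fun _ => hh₁.abs_mul_discountFactor_le hρ hκ hN₁ lam) hbond
  simp only [alphaDeriv_eq, add_sub_add_comm]
  refine (((hh₁.memExpL2_one_sub_mul_discountFactor_mul hρ lam).sub
    (hh₂.memExpL2_one_sub_mul_discountFactor_mul hρ lam)).expL2Norm_add_le).trans
    (add_le_add (hforward.trans ?_) (hsquare.trans ?_))
  · gcongr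
    exacts [(hh₁.sub hh₂ hρ).1.expL2Norm_le.trans hD, hh₂.1.expL2Norm_le.trans hN₂]
  · gcongr
    exacts [hh₁.expL2Norm_mul_self_sub_le hh₂ hρ hκ hN₁ hN₂ hD,
      hh₂.expL2Norm_mul_le_of_le hh₂ hρ hκ hN₂ hN₂]

lemma MemFilZero.filNorm_alpha_le (hh : MemFilZero ρ h g) (hρ : 0 < ρ)
    (hκ : 2 / (ρ * √ρ) ≤ κ) (hN : filNorm ρ h g ≤ N) (lam : ℝ) :
    filNorm ρ (alpha lam h) (alphaDeriv lam h g) ≤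
      2 * (1 + κ) ^ 2 * (N + |lam| * VK κ N) := by
  have hκ₀ : 0 ≤ κ := le_trans (by positivity) hκ
  have hN₀ : 0 ≤ N := filNorm_nonneg.trans hN
  have hinit : |alpha lam h 0| ≤ N * (1 + |lam| * exp (κ * N)) := by
    rw [alpha, abs_mul]
    exact mul_le_mul (hh.1.abs_apply_zero_le.trans hN)
      (hh.abs_one_sub_mul_discountFactor_le hρ hκ hN lam le_rfl) (abs_nonneg _) hN₀
  have hcoeff : 2 + κ / 2 * N ≤ 2 * (1 + κ) ^ 2 * (1 + N) := by
    nlinarith [mul_nonneg hκ₀ hN₀, mul_nonneg hκ₀ (mul_nonneg hκ₀ hN₀)]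
  calc filNorm ρ (alpha lam h) (alphaDeriv lam h g)
      ≤ |alpha lam h 0| + expL2Norm ρ (alphaDeriv lam h g) :=
        (hh.memFilZero_alpha hρ lam).1.filNorm_le
    _ ≤ N * (1 + |lam| * exp (κ * N)) +
          ((1 + |lam| * exp (κ * N)) * N + |lam| * exp (κ * N) * (κ / 2 * (N * N))) :=
        add_le_add hinit (hh.expL2Norm_alphaDeriv_le hρ hκ hN lam)
    _ = 2 * N + |lam| * exp (κ * N) * N * (2 + κ / 2 * N) := by ring
    _ ≤ 2 * (1 + κ) ^ 2 * N + |lam| * exp (κ * N) * N * (2 * (1 + κ) ^ 2 * (1 + N)) := by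
        gcongr
        nlinarith
    _ = 2 * (1 + κ) ^ 2 * (N + |lam| * VK κ N) := by
        rw [VK]
        ring

lemma MemFilZero.filNorm_alpha_sub_le (hh₁ : MemFilZero ρ h₁ g₁)
    (hh₂ : MemFilZero ρ h₂ g₂) (hρ : 0 < ρ) (hκ : 2 / (ρ * √ρ) ≤ κ)
    (hN₁ : filNorm ρ h₁ g₁ ≤ N) (hN₂ : filNorm ρ h₂ g₂ ≤ N)
    (hD : filNorm ρ (fun t => h₁ t - h₂ t) (fun t => g₁ t - g₂ t) ≤ D) (lam : ℝ) :
    filNorm ρ (fun t => alpha lam h₁ t - alpha lam h₂ t)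
        (fun t => alphaDeriv lam h₁ g₁ t - alphaDeriv lam h₂ g₂ t) ≤
      2 * (1 + κ) ^ 2 * D * ((1 + |lam|) + |lam| * VK κ N) := by
  have hκ₀ : 0 ≤ κ := le_trans (by positivity) hκ
  have hN₀ : 0 ≤ N := filNorm_nonneg.trans hN₁
  have hD₀ : 0 ≤ D := filNorm_nonneg.trans hD
  have hinit : |alpha lam h₁ 0 - alpha lam h₂ 0| ≤ D * (1 + |lam|) := by
    rw [alpha_zero, alpha_zero, ← sub_mul, abs_mul]
    gcongr
    · exact (hh₁.1.sub hh₂.1 hρ).abs_apply_zero_le.trans hD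
    · exact (abs_sub _ _).trans_eq (by rw [abs_one])
  have hexp := exp_le_one_add_mul_exp (κ * N)
  have hcoeff : κ * (3 + κ / 2 * N) ≤ 2 * (1 + κ) ^ 2 * (1 + N) := by
    nlinarith [mul_nonneg hκ₀ hN₀, mul_nonneg hκ₀ (mul_nonneg hκ₀ hN₀)]
  calc _ ≤ |alpha lam h₁ 0 - alpha lam h₂ 0| +
          expL2Norm ρ (fun t => alphaDeriv lam h₁ g₁ t - alphaDeriv lam h₂ g₂ t) :=
        ((hh₁.memFilZero_alpha hρ lam).1.sub (hh₂.memFilZero_alpha hρ lam).1 hρ).filNorm_le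
    _ ≤ _ := add_le_add hinit (hh₁.expL2Norm_alphaDeriv_sub_le hh₂ hρ hκ hN₁ hN₂ hD lam)
    _ = D * (2 + |lam| + |lam| * exp (κ * N) +
          |lam| * exp (κ * N) * N * (κ * (2 + κ / 2 * N))) := by ring
    _ ≤ D * (2 + |lam| + |lam| * (1 + κ * N * exp (κ * N)) +
          |lam| * exp (κ * N) * N * (κ * (2 + κ / 2 * N))) := by gcongr
    _ = D * (2 * (1 + |lam|) + |lam| * exp (κ * N) * N * (κ * (3 + κ / 2 * N))) := by ring
    _ ≤ D * (2 * (1 + κ) ^ 2 * (1 + |lam|) +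
          |lam| * exp (κ * N) * N * (2 * (1 + κ) ^ 2 * (1 + N))) := by
        gcongr
        nlinarith
    _ = 2 * (1 + κ) ^ 2 * D * ((1 + |lam|) + |lam| * VK κ N) := by
        rw [VK]
        ring

end Alpha

lemma Krr_nonneg (ρ ρ' : ℝ) : 0 ≤ Krr ρ ρ' := by
  unfold Krr
  positivity

lemma two_div_mul_sqrt_le_Krr {ρ ρ' : ℝ} (hρ : 0 < ρ) (hρρ' : ρ < ρ') :
    2 / (ρ' * √ρ') ≤ Krr ρ ρ' := by
  have hρ' : 0 < ρ' := hρ.trans hρρ'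
  have hd : 0 < ρ' - ρ := sub_pos.mpr hρρ'
  have hamgm : 2 * (√ρ * √(ρ' - ρ)) ≤ ρ' := by
    simpa [mul_assoc, sq_sqrt hρ.le, sq_sqrt hd.le] using two_mul_le_add_sq √ρ √(ρ' - ρ)
  have hroot : √(1 / (ρ' * (ρ' - ρ))) = 1 / (√ρ' * √(ρ' - ρ)) := by
    rw [sqrt_div zero_le_one, sqrt_one, sqrt_mul hρ'.le]
  calc 2 / (ρ' * √ρ') ≤ 1 / √ρ * (1 / (√ρ' * √(ρ' - ρ))) := by
        rw [one_div_mul_one_div, div_le_div_iff₀ (by positivity) (by positivity)]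
        nlinarith [mul_le_mul_of_nonneg_right hamgm (sqrt_nonneg ρ')]
    _ ≤ (1 + 1 / √ρ) * √(1 / (ρ' * (ρ' - ρ))) := by
        rw [hroot]
        gcongr
        exact le_add_of_nonneg_left zero_le_one

theorem filipovic_alpha_lambda_general {ρ ρ' κ : ℝ} (hρ' : 0 < ρ') (hρρ' : ρ ≤ ρ')
    (hκ : 2 / (ρ' * √ρ') ≤ κ) {X : Type*} [SeminormedAddCommGroup X] (γ dγ : X → ℝ → ℝ)
    (hmem : ∀ x, MemFil ρ' (γ x) (dγ x)) (hlim : ∀ x, Tendsto (γ x) atTop (nhds 0))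
    (Lγ Bγ : ℝ → ℝ)
    (hLip : ∀ r, 0 ≤ r → ∀ x₁ x₂ : X, ‖x₁‖ ≤ r → ‖x₂‖ ≤ r →
      filNorm ρ' (fun t => γ x₁ t - γ x₂ t) (fun t => dγ x₁ t - dγ x₂ t) ≤ Lγ r * ‖x₁ - x₂‖)
    (hBd : ∀ r, 0 ≤ r → ∀ x : X, ‖x‖ ≤ r → filNorm ρ' (γ x) (dγ x) ≤ Bγ r) :
    (∀ lam x, MemFilZero ρ (alpha lam (γ x)) (alphaDeriv lam (γ x) (dγ x))) ∧
    ∀ lam r, 0 ≤ r →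
      (∀ x₁ x₂ : X, ‖x₁‖ ≤ r → ‖x₂‖ ≤ r →
        filNorm ρ (fun ξ => alpha lam (γ x₁) ξ - alpha lam (γ x₂) ξ)
            (fun t => alphaDeriv lam (γ x₁) (dγ x₁) t - alphaDeriv lam (γ x₂) (dγ x₂) t) ≤
          2 * (1 + κ) ^ 2 * Lγ r * ((1 + |lam|) + |lam| * VK κ (Bγ r)) * ‖x₁ - x₂‖) ∧
      (∀ x : X, ‖x‖ ≤ r →
        filNorm ρ (alpha lam (γ x)) (alphaDeriv lam (γ x) (dγ x)) ≤
          2 * (1 + κ) ^ 2 * (Bγ r + |lam| * VK κ (Bγ r))) := by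
  have hγ (x : X) : MemFilZero ρ' (γ x) (dγ x) := ⟨hmem x, hlim x⟩
  have hα (lam : ℝ) (x : X) := (hγ x).memFilZero_alpha hρ' lam
  refine ⟨fun lam x => ⟨(hα lam x).1.mono hρρ', (hα lam x).2⟩, fun lam r hr =>
    ⟨fun x₁ x₂ hx₁ hx₂ => ?_, fun x hx => ?_⟩⟩
  · refine (((hα lam x₁).1.sub (hα lam x₂).1 hρ').filNorm_mono hρρ').trans <|
      ((hγ x₁).filNorm_alpha_sub_le (hγ x₂) hρ' hκ (hBd r hr x₁ hx₁) (hBd r hr x₂ hx₂)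
        (hLip r hr x₁ x₂ hx₁ hx₂) lam).trans_eq ?_
    ring
  · exact ((hα lam x).1.filNorm_mono hρρ').trans
      ((hγ x).filNorm_alpha_le hρ' hκ (hBd r hr x hx) lam)

end

/-- for `γ : X → H⁰_{ρ'}` locally Lipschitz with Lipschitz function `L_γ`
and boundedness function `B_γ`, the maps `α_λ(x) = γ(x)·(1 − λ exp(−𝓘γ(x)))`, `λ > 0`,
take values in `H⁰_ρ`, are locally Lipschitz, and satisfy explicit estimates with a
constant `K > 0` independent of `λ`. -/
theorem filipovic_alpha_lambda (ρ ρ' : ℝ) (hρ : 0 < ρ) (hρρ' : ρ < ρ')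
    {X : Type*} [NormedAddCommGroup X] [NormedSpace ℝ X]
    (γ dγ : X → ℝ → ℝ)
    (hmem : ∀ x : X, MemFil ρ' (γ x) (dγ x))
    (hlim : ∀ x : X, Tendsto (γ x) atTop (nhds 0))
    (Lγ Bγ : ℝ → ℝ)
    (hLmono : MonotoneOn Lγ (Set.Ici 0)) (hLnn : ∀ r : ℝ, 0 ≤ r → 0 ≤ Lγ r)
    (hBmono : MonotoneOn Bγ (Set.Ici 0)) (hBnn : ∀ r : ℝ, 0 ≤ r → 0 ≤ Bγ r)
    (hLip : ∀ r : ℝ, 0 ≤ r → ∀ x₁ x₂ : X, ‖x₁‖ ≤ r → ‖x₂‖ ≤ r →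
      filNorm ρ' (fun t => γ x₁ t - γ x₂ t) (fun t => dγ x₁ t - dγ x₂ t)
        ≤ Lγ r * ‖x₁ - x₂‖)
    (hBd : ∀ r : ℝ, 0 ≤ r → ∀ x : X, ‖x‖ ≤ r → filNorm ρ' (γ x) (dγ x) ≤ Bγ r) :
    (∀ lam : ℝ, 0 < lam → ∀ x : X,
      MemFil ρ
        (fun ξ => γ x ξ * (1 - lam * Real.exp (-(∫ t in (0:ℝ)..ξ, γ x t))))
        (fun t => dγ x t * (1 - lam * Real.exp (-(∫ s in (0:ℝ)..t, γ x s)))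
          + γ x t * (lam * γ x t * Real.exp (-(∫ s in (0:ℝ)..t, γ x s)))) ∧
      Tendsto (fun ξ => γ x ξ * (1 - lam * Real.exp (-(∫ t in (0:ℝ)..ξ, γ x t))))
        atTop (nhds 0)) ∧
    ∃ K : ℝ, 0 < K ∧ ∀ lam : ℝ, 0 < lam → ∀ r : ℝ, 0 ≤ r →
      (∀ x₁ x₂ : X, ‖x₁‖ ≤ r → ‖x₂‖ ≤ r →
        filNorm ρ
          (fun ξ => γ x₁ ξ * (1 - lam * Real.exp (-(∫ t in (0:ℝ)..ξ, γ x₁ t)))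
            - γ x₂ ξ * (1 - lam * Real.exp (-(∫ t in (0:ℝ)..ξ, γ x₂ t))))
          (fun t => (dγ x₁ t * (1 - lam * Real.exp (-(∫ s in (0:ℝ)..t, γ x₁ s)))
              + γ x₁ t * (lam * γ x₁ t * Real.exp (-(∫ s in (0:ℝ)..t, γ x₁ s))))
            - (dγ x₂ t * (1 - lam * Real.exp (-(∫ s in (0:ℝ)..t, γ x₂ s)))
              + γ x₂ t * (lam * γ x₂ t * Real.exp (-(∫ s in (0:ℝ)..t, γ x₂ s)))))
          ≤ K * Lγ r * ((1 + lam) + lam * VK (Krr ρ ρ') (Bγ r)) * ‖x₁ - x₂‖) ∧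
      (∀ x : X, ‖x‖ ≤ r →
        filNorm ρ
          (fun ξ => γ x ξ * (1 - lam * Real.exp (-(∫ t in (0:ℝ)..ξ, γ x t))))
          (fun t => dγ x t * (1 - lam * Real.exp (-(∫ s in (0:ℝ)..t, γ x s)))
            + γ x t * (lam * γ x t * Real.exp (-(∫ s in (0:ℝ)..t, γ x s))))
          ≤ K * (Bγ r + lam * VK (Krr ρ ρ') (Bγ r))) := by
  obtain ⟨hα, hest⟩ := filipovic_alpha_lambda_general (hρ.trans hρρ') hρρ'.le
    (two_div_mul_sqrt_le_Krr hρ hρρ') γ dγ hmem hlim Lγ Bγ hLip hBd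
  refine ⟨fun lam _ => hα lam, 2 * (1 + Krr ρ ρ') ^ 2, ?_, fun lam hlam => ?_⟩
  · have := Krr_nonneg ρ ρ'
    positivity
  · have hest := hest lam
    rwa [abs_of_pos hlam] at hest
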